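/- Injectivity of the gradient of E_f: assume the Cramér moment assumption 0 ∈ interior(D_L), let f : [0,1] → ℝ be a Lipschitz function not identically zero, and assume that the support of the distribution of X₁ is not contained in any affine hyperplane of ℝ^d. Then the map λ ↦ ∇E_f(λ) = ∫₀¹ f(t)·∇K(f(t)λ) dt is injective on the set {λ ∈ ℝ^d : f(t)λ ∈ interior(D_L) for every t ∈ [0,1]}, where ∇K denotes the gradient of K, which exists on interior(D_L). -/

import Mathlib

/-! The function `K` is differentiable and strictly convex on `interior D_L`, so `∇K` is strictly
monotone there. Suppose that `∇E_f` takes the same value at `l₁ ≠ l₂`, and pair the difference of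
the two integrals with `l₁ - l₂`. This gives
`∫₀¹ ⟪∇K(f(t)l₁) - ∇K(f(t)l₂), f(t)l₁ - f(t)l₂⟫ dt = 0`, where the integrand is nonnegative and
vanishes only if `f(t) = 0`. Hence `f = 0` almost everywhere on `[0,1]`, and everywhere by
continuity, a contradiction.

Since a Bochner integral is zero for a non-integrable integrand, the integrability of
`t ↦ f(t) ∇K(f(t)l)` has to be proved; it follows from the continuity of `∇K`. Both this continuity
and the formula `∇K(u) = E[exp(u·X₁) X₁] / L(u)` (`hasGradientAt_cgfK`) come from dominated
convergence, with the dominating function provided by `exists_integrable_exp_norm`: around an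
interior point `u` of `D_L`, even `exp(u·X₁ + r‖X₁‖)` is integrable for some `r > 0`.

Strict convexity (`cgfK_strict_gradient_ineq`) is the equality case of Jensen's inequality for the
tilted law with density `exp(a·X₁) / L(a)`: it would force `(b - a)·X₁` to be almost surely
constant. -/

open Set Filter Topology MeasureTheory
open scoped RealInnerProductSpace ENNReal

noncomputable section

/-- The Laplace transform `L(u) = E[exp(u·X₁)]`. -/
def lap {d : ℕ} {Ω : Type*} [MeasurableSpace Ω] (P : Measure Ω)
    (X1 : Ω → EuclideanSpace ℝ (Fin d)) (u : EuclideanSpace ℝ (Fin d)) : ℝ≥0∞ :=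
  ∫⁻ ω, ENNReal.ofReal (Real.exp ⟪u, X1 ω⟫) ∂P

/-- The effective domain `D_L` of the Laplace transform. -/
def lapDom {d : ℕ} {Ω : Type*} [MeasurableSpace Ω] (P : Measure Ω)
    (X1 : Ω → EuclideanSpace ℝ (Fin d)) : Set (EuclideanSpace ℝ (Fin d)) :=
  {u | lap P X1 u ≠ ⊤}

/-- The cumulant generating function `K = log L` (junk value where `L = ∞`). -/
def cgfK {d : ℕ} {Ω : Type*} [MeasurableSpace Ω] (P : Measure Ω)
    (X1 : Ω → EuclideanSpace ℝ (Fin d)) (u : EuclideanSpace ℝ (Fin d)) : ℝ :=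
  Real.log (lap P X1 u).toReal

/-! ### The Laplace transform as a Bochner integral -/

section CumulantGradient

variable {d : ℕ} {Ω : Type*} [MeasurableSpace Ω] {P : Measure Ω}
  {X1 : Ω → EuclideanSpace ℝ (Fin d)}

/-- The unnormalised tilted mean `E[exp(u·X₁) X₁]`, which is the gradient of `L` on the interior
of `D_L`. -/
def tiltMean (P : Measure Ω) (X1 : Ω → EuclideanSpace ℝ (Fin d))
    (u : EuclideanSpace ℝ (Fin d)) : EuclideanSpace ℝ (Fin d) :=
  ∫ ω, Real.exp ⟪u, X1 ω⟫ • X1 ω ∂P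

lemma measurable_exp_inner (hX1 : Measurable X1) (u : EuclideanSpace ℝ (Fin d)) :
    Measurable fun ω => Real.exp ⟪u, X1 ω⟫ := by
  fun_prop

lemma cgfK_eq_log_integral (hX1 : Measurable X1) (u : EuclideanSpace ℝ (Fin d)) :
    cgfK P X1 u = Real.log (∫ ω, Real.exp ⟪u, X1 ω⟫ ∂P) := by
  rw [cgfK, lap, integral_eq_lintegral_of_nonneg_ae (ae_of_all _ fun _ => (Real.exp_pos _).le)
    (measurable_exp_inner hX1 u).aestronglyMeasurable]

lemma integrable_exp_of_mem_lapDom (hX1 : Measurable X1) {u : EuclideanSpace ℝ (Fin d)}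
    (hu : u ∈ lapDom P X1) : Integrable (fun ω => Real.exp ⟪u, X1 ω⟫) P := by
  refine ⟨(measurable_exp_inner hX1 u).aestronglyMeasurable, ?_⟩
  rw [hasFiniteIntegral_iff_ofReal (ae_of_all _ fun _ => (Real.exp_pos _).le)]
  exact lt_top_iff_ne_top.2 hu

/-! ### Exponential moments at interior points of the domain -/

lemma norm_le_sum_abs (x : EuclideanSpace ℝ (Fin d)) : ‖x‖ ≤ ∑ i, |x i| := by
  conv_lhs => rw [← (EuclideanSpace.basisFun (Fin d) ℝ).sum_repr x]
  refine (norm_sum_le _ _).trans (Finset.sum_le_sum fun i _ => ?_)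
  simp [norm_smul]

/-- An exponential of the norm is controlled by finitely many exponentials of linear forms; the
summand `1` is only needed in dimension zero. -/
lemma exp_norm_le_sum (s : ℝ) (hs : 0 < s) (x : EuclideanSpace ℝ (Fin d)) :
    Real.exp (s / (d + 1) * ‖x‖) ≤
      1 + ∑ i, (Real.exp (s * x i) + Real.exp (-(s * x i))) := by
  have hpos : ∀ i, 0 ≤ Real.exp (s * x i) + Real.exp (-(s * x i)) := fun i => by positivity
  rcases Nat.eq_zero_or_pos d with rfl | hd
  · have : x = 0 := Subsingleton.elim _ _
    simp [this]
  · have : Nonempty (Fin d) := ⟨⟨0, hd⟩⟩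
    -- Some coordinate is at least the average of the coordinates in absolute value.
    obtain ⟨i, -, hi⟩ := Finset.exists_le_of_sum_le (s := (Finset.univ : Finset (Fin d)))
      (f := fun _ => ‖x‖ / (d + 1)) (g := fun i => |x i|) Finset.univ_nonempty (by
        refine le_trans ?_ (norm_le_sum_abs x)
        rw [Finset.sum_const, Finset.card_univ, Fintype.card_fin, nsmul_eq_mul, mul_div_assoc',
          div_le_iff₀ (by positivity)]
        nlinarith [norm_nonneg x])
    have h1 : s / (d + 1) * ‖x‖ ≤ |s * x i| := by
      rw [abs_mul, abs_of_pos hs, div_mul_eq_mul_div, mul_div_assoc]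
      gcongr
    have h2 : Real.exp |s * x i| ≤ Real.exp (s * x i) + Real.exp (-(s * x i)) := by
      rcases abs_cases (s * x i) with h | h <;> rw [h.1] <;>
        linarith [Real.exp_pos (s * x i), Real.exp_pos (-(s * x i))]
    have h3 := Finset.single_le_sum (fun j _ => hpos j) (Finset.mem_univ i)
    linarith [Real.exp_le_exp.2 h1]

/-- At an interior point of `D_L` the exponential moment persists with an extra factor
`exp(r‖X₁‖)`. This supplies the dominating functions. -/
lemma exists_integrable_exp_norm (hX1 : Measurable X1) {u : EuclideanSpace ℝ (Fin d)}
    (hu : u ∈ interior (lapDom P X1)) :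
    ∃ r > 0, Integrable (fun ω => Real.exp (⟪u, X1 ω⟫ + r * ‖X1 ω‖)) P := by
  obtain ⟨ε, hε, hball⟩ := Metric.isOpen_iff.1 isOpen_interior u hu
  have hshift : ∀ (c : ℝ), |c| < ε → ∀ i : Fin d,
      Integrable (fun ω => Real.exp (⟪u, X1 ω⟫ + c * X1 ω i)) P := by
    intro c hc i
    have hmem : u + c • EuclideanSpace.single i (1 : ℝ) ∈ lapDom P X1 := by
      apply interior_subset
      apply hball
      simpa [norm_smul] using hc
    refine (integrable_exp_of_mem_lapDom hX1 hmem).congr (ae_of_all _ fun ω => ?_)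
    simp [inner_add_left, inner_smul_left, EuclideanSpace.inner_single_left]
  refine ⟨ε / 2 / (d + 1), by positivity, ?_⟩
  have hdom : Integrable (fun ω => Real.exp ⟪u, X1 ω⟫ + ∑ i,
      (Real.exp (⟪u, X1 ω⟫ + ε / 2 * X1 ω i) + Real.exp (⟪u, X1 ω⟫ + -(ε / 2) * X1 ω i))) P := by
    refine (integrable_exp_of_mem_lapDom hX1 (interior_subset hu)).add
      (integrable_finsetSum _ fun i _ => (hshift _ ?_ i).add (hshift _ ?_ i))
    · rw [abs_of_pos (by positivity)]; linarith
    · rw [abs_neg, abs_of_pos (by positivity)]; linarith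
  refine hdom.mono' (by fun_prop) (ae_of_all _ fun ω => ?_)
  rw [Real.norm_of_nonneg (Real.exp_pos _).le, Real.exp_add]
  refine (mul_le_mul_of_nonneg_left (exp_norm_le_sum (ε / 2) (by positivity) (X1 ω))
    (Real.exp_pos _).le).trans (le_of_eq ?_)
  simp only [Real.exp_add, mul_add, mul_one, Finset.mul_sum, neg_mul]

/-- One integrable function dominates the integrands of `tiltMean` at all points of a ball
around `u`. -/
lemma exists_tilt_bound (hX1 : Measurable X1) {u : EuclideanSpace ℝ (Fin d)}
    (hu : u ∈ interior (lapDom P X1)) :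
    ∃ δ > 0, ∃ g : Ω → ℝ, Integrable g P ∧
      ∀ ω, ∀ v ∈ Metric.ball u δ, ‖Real.exp ⟪v, X1 ω⟫ • X1 ω‖ ≤ g ω := by
  obtain ⟨r, hr, hint⟩ := exists_integrable_exp_norm hX1 hu
  -- Half of `r` absorbs the displacement `v - u`, the other half the factor `‖X₁‖`.
  refine ⟨r / 2, by positivity, _, hint.const_mul (2 / r), fun ω v hv => ?_⟩
  have h1 : ⟪v, X1 ω⟫ ≤ ⟪u, X1 ω⟫ + r / 2 * ‖X1 ω‖ := by
    have h := real_inner_le_norm (v - u) (X1 ω)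
    rw [inner_sub_left] at h
    have h' : ‖v - u‖ ≤ r / 2 := (mem_ball_iff_norm.1 hv).le
    nlinarith [norm_nonneg (X1 ω)]
  have h2 : r / 2 * ‖X1 ω‖ ≤ Real.exp (r / 2 * ‖X1 ω‖) := by
    linarith [Real.add_one_le_exp (r / 2 * ‖X1 ω‖)]
  have h3 : ‖X1 ω‖ ≤ 2 / r * Real.exp (r / 2 * ‖X1 ω‖) := by
    rw [div_mul_eq_mul_div, le_div_iff₀ hr]
    linarith
  rw [norm_smul, Real.norm_of_nonneg (Real.exp_pos _).le]
  calc Real.exp ⟪v, X1 ω⟫ * ‖X1 ω‖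
      ≤ Real.exp (⟪u, X1 ω⟫ + r / 2 * ‖X1 ω‖) * (2 / r * Real.exp (r / 2 * ‖X1 ω‖)) := by
        gcongr
    _ = 2 / r * Real.exp (⟪u, X1 ω⟫ + r * ‖X1 ω‖) := by
        rw [mul_left_comm, ← Real.exp_add]
        ring_nf

lemma integrable_tilt (hX1 : Measurable X1) {u : EuclideanSpace ℝ (Fin d)}
    (hu : u ∈ interior (lapDom P X1)) :
    Integrable (fun ω => Real.exp ⟪u, X1 ω⟫ • X1 ω) P := by
  obtain ⟨δ, hδ, g, hg, hb⟩ := exists_tilt_bound hX1 hu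
  exact hg.mono' (by fun_prop) (ae_of_all _ fun ω => hb ω u (Metric.mem_ball_self hδ))

/-! ### Differentiability of the cumulant generating function -/

lemma continuousAt_tiltMean (hX1 : Measurable X1) {u : EuclideanSpace ℝ (Fin d)}
    (hu : u ∈ interior (lapDom P X1)) : ContinuousAt (tiltMean P X1) u := by
  obtain ⟨δ, hδ, g, hg, hb⟩ := exists_tilt_bound hX1 hu
  refine continuousAt_of_dominated (bound := g) (Eventually.of_forall fun v => by fun_prop) ?_ hg
    (ae_of_all _ fun ω => by fun_prop)
  filter_upwards [Metric.ball_mem_nhds u hδ] with v hv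
  exact ae_of_all _ fun ω => hb ω v hv

lemma hasGradientAt_integral_exp (hX1 : Measurable X1) {u : EuclideanSpace ℝ (Fin d)}
    (hu : u ∈ interior (lapDom P X1)) :
    HasGradientAt (fun v => ∫ ω, Real.exp ⟪v, X1 ω⟫ ∂P) (tiltMean P X1 u) u := by
  obtain ⟨δ, hδ, g, hg, hb⟩ := exists_tilt_bound hX1 hu
  have key := hasFDerivAt_integral_of_dominated_of_fderiv_le (μ := P) (𝕜 := ℝ)
    (F := fun v ω => Real.exp ⟪v, X1 ω⟫)
    (F' := fun v ω => innerSL ℝ (Real.exp ⟪v, X1 ω⟫ • X1 ω)) (bound := g)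
    (Metric.ball_mem_nhds u hδ)
    (Eventually.of_forall fun v => (measurable_exp_inner hX1 v).aestronglyMeasurable)
    (integrable_exp_of_mem_lapDom hX1 (interior_subset hu))
    ((innerSL ℝ).continuous.comp_aestronglyMeasurable (integrable_tilt hX1 hu).1)
    (ae_of_all _ fun ω v hv => by rw [innerSL_apply_norm]; exact hb ω v hv) hg
    (ae_of_all _ fun ω v _ => by
      have h : HasFDerivAt (fun v : EuclideanSpace ℝ (Fin d) => ⟪v, X1 ω⟫)
          (innerSL ℝ (X1 ω)) v := by
        refine (innerSL ℝ (X1 ω)).hasFDerivAt.congr_of_eventuallyEq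
          (Eventually.of_forall fun w => ?_)
        exact real_inner_comm _ _
      simpa using h.exp)
  rw [hasGradientAt_iff_hasFDerivAt]
  rw [(innerSL ℝ).integral_comp_comm (integrable_tilt hX1 hu)] at key
  exact key

variable [IsProbabilityMeasure P]

lemma hasGradientAt_cgfK (hX1 : Measurable X1) {u : EuclideanSpace ℝ (Fin d)}
    (hu : u ∈ interior (lapDom P X1)) :
    HasGradientAt (cgfK P X1) ((∫ ω, Real.exp ⟪u, X1 ω⟫ ∂P)⁻¹ • tiltMean P X1 u) u := by
  have hpos := integral_exp_pos (integrable_exp_of_mem_lapDom hX1 (interior_subset hu))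
  have h := (hasGradientAt_integral_exp hX1 hu).hasFDerivAt.log hpos.ne'
  rw [hasGradientAt_iff_hasFDerivAt, funext (cgfK_eq_log_integral hX1)]
  simpa using h

lemma continuousOn_gradient_cgfK (hX1 : Measurable X1) :
    ContinuousOn (gradient (cgfK P X1)) (interior (lapDom P X1)) := by
  refine ContinuousOn.congr (f := fun u => (∫ ω, Real.exp ⟪u, X1 ω⟫ ∂P)⁻¹ • tiltMean P X1 u)
    (fun u hu => ContinuousAt.continuousWithinAt ?_) fun u hu => (hasGradientAt_cgfK hX1 hu).gradient
  have hpos := integral_exp_pos (integrable_exp_of_mem_lapDom hX1 (interior_subset hu))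
  exact ((hasGradientAt_integral_exp hX1 hu).hasFDerivAt.continuousAt.inv₀ hpos.ne').smul
    (continuousAt_tiltMean hX1 hu)

/-! ### Strict convexity of the cumulant generating function -/

/-- The strict first-order inequality for the convex function `K`: the graph lies strictly above
its tangent planes as soon as `X₁` is not supported by an affine hyperplane. -/
lemma cgfK_strict_gradient_ineq (hX1 : Measurable X1)
    (hfull : ¬ ∃ (v : EuclideanSpace ℝ (Fin d)) (c : ℝ), v ≠ 0 ∧ ∀ᵐ ω ∂P, ⟪v, X1 ω⟫ = c)
    {a b : EuclideanSpace ℝ (Fin d)} (ha : a ∈ interior (lapDom P X1)) (hb : b ∈ lapDom P X1)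
    (hab : a ≠ b) :
    ⟪gradient (cgfK P X1) a, b - a⟫ < cgfK P X1 b - cgfK P X1 a := by
  have hia := integrable_exp_of_mem_lapDom hX1 (interior_subset ha)
  have hib := integrable_exp_of_mem_lapDom hX1 hb
  have hLa := integral_exp_pos hia
  have hLb := integral_exp_pos hib
  have hit : Integrable (fun ω => Real.exp ⟪a, X1 ω⟫ * ⟪b - a, X1 ω⟫) P := by
    refine ((integrable_tilt hX1 ha).const_inner (𝕜 := ℝ) (b - a)).congr
      (ae_of_all _ fun ω => ?_)
    simp only [inner_smul_right]
  have hmean : ∫ ω, Real.exp ⟪a, X1 ω⟫ * ⟪b - a, X1 ω⟫ ∂P = ⟪tiltMean P X1 a, b - a⟫ := by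
    rw [real_inner_comm, tiltMean, ← integral_inner (integrable_tilt hX1 ha)]
    simp only [inner_smul_right]
  rw [(hasGradientAt_cgfK hX1 ha).gradient, cgfK_eq_log_integral hX1, cgfK_eq_log_integral hX1,
    real_inner_smul_left, ← hmean]
  set La := ∫ ω, Real.exp ⟪a, X1 ω⟫ ∂P
  set Lb := ∫ ω, Real.exp ⟪b, X1 ω⟫ ∂P
  set T := ∫ ω, Real.exp ⟪a, X1 ω⟫ * ⟪b - a, X1 ω⟫ ∂P
  -- The mean of `(b - a)·X₁` under the tilted law.
  set m := La⁻¹ * T with hm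
  have hT : T = m * La := by rw [hm]; field_simp
  -- The gap between `exp` and its tangent line at `m`, evaluated at `(b - a)·X₁` and integrated
  -- against the tilted law.
  let φ : Ω → ℝ := fun ω => Real.exp ⟪b, X1 ω⟫ -
    Real.exp m * ((1 - m) * Real.exp ⟪a, X1 ω⟫ + Real.exp ⟪a, X1 ω⟫ * ⟪b - a, X1 ω⟫)
  have hφ : ∀ ω, φ ω = Real.exp (⟪a, X1 ω⟫ + m) *
      (Real.exp (⟪b - a, X1 ω⟫ - m) - ((⟪b - a, X1 ω⟫ - m) + 1)) := by
    intro ω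
    have h : Real.exp ⟪b, X1 ω⟫ =
        Real.exp (⟪a, X1 ω⟫ + m) * Real.exp (⟪b - a, X1 ω⟫ - m) := by
      rw [← Real.exp_add, inner_sub_left]
      ring_nf
    simp only [φ]
    rw [h, Real.exp_add]
    ring
  have hφ0 : 0 ≤ φ := fun ω => by
    rw [hφ]
    exact mul_nonneg (Real.exp_pos _).le (sub_nonneg.2 (Real.add_one_le_exp _))
  have hsum : Integrable
      (fun ω => (1 - m) * Real.exp ⟪a, X1 ω⟫ + Real.exp ⟪a, X1 ω⟫ * ⟪b - a, X1 ω⟫) P :=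
    (hia.const_mul _).add hit
  have hφi : Integrable φ P := hib.sub (hsum.const_mul _)
  have hφint : ∫ ω, φ ω ∂P = Lb - Real.exp m * La := by
    simp only [φ]
    rw [integral_sub hib (hsum.const_mul _), integral_const_mul,
      integral_add (hia.const_mul _) hit, integral_const_mul]
    change Lb - Real.exp m * ((1 - m) * La + T) = _
    rw [hT]
    ring
  have hlt : 0 < ∫ ω, φ ω ∂P := by
    refine lt_of_le_of_ne (integral_nonneg hφ0) fun h0 => hfull ⟨b - a, m, ?_, ?_⟩
    · exact sub_ne_zero.2 hab.symm
    · filter_upwards [(integral_eq_zero_iff_of_nonneg hφ0 hφi).1 h0.symm] with ω hω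
      by_contra hne
      have h1 := Real.add_one_lt_exp (sub_ne_zero.2 hne)
      have h2 : 0 < φ ω := by
        rw [hφ]
        exact mul_pos (Real.exp_pos _) (sub_pos.2 h1)
      exact h2.ne' hω
  have h := Real.log_lt_log (by positivity) (show Real.exp m * La < Lb by linarith)
  rw [Real.log_mul (Real.exp_pos _).ne' hLa.ne', Real.log_exp] at h
  linarith

lemma gradient_cgfK_strict_mono (hX1 : Measurable X1)
    (hfull : ¬ ∃ (v : EuclideanSpace ℝ (Fin d)) (c : ℝ), v ≠ 0 ∧ ∀ᵐ ω ∂P, ⟪v, X1 ω⟫ = c)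
    {a b : EuclideanSpace ℝ (Fin d)} (ha : a ∈ interior (lapDom P X1))
    (hb : b ∈ interior (lapDom P X1)) (hab : a ≠ b) :
    0 < ⟪gradient (cgfK P X1) a - gradient (cgfK P X1) b, a - b⟫ := by
  have h1 := cgfK_strict_gradient_ineq hX1 hfull ha (interior_subset hb) hab
  have h2 := cgfK_strict_gradient_ineq hX1 hfull hb (interior_subset ha) hab.symm
  simp only [inner_sub_left, inner_sub_right] at *
  linarith

end CumulantGradient

/-! ### Injectivity of the gradient -/

/-- If the support of the distribution of `X₁` is not contained in any affine hyperplane, then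
`∇E_f : λ ↦ ∫₀¹ f(t) ∇K(f(t)λ) dt` is injective on
`{λ : f(t)λ ∈ interior D_L for all t ∈ [0,1]}`. -/
theorem gradient_Ef_injective
    {d : ℕ} {Ω : Type*} [MeasurableSpace Ω] (P : Measure Ω) [IsProbabilityMeasure P]
    (X1 : Ω → EuclideanSpace ℝ (Fin d)) (hX1 : Measurable X1)
    (hCramer : (0 : EuclideanSpace ℝ (Fin d)) ∈ interior (lapDom P X1))
    (f : ℝ → ℝ) (hLip : ∃ C : NNReal, LipschitzOnWith C f (Icc (0:ℝ) 1))
    (hfne : ∃ t ∈ Icc (0:ℝ) 1, f t ≠ 0)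
    (hfull : ¬ ∃ (v : EuclideanSpace ℝ (Fin d)) (c : ℝ), v ≠ 0 ∧ ∀ᵐ ω ∂P, ⟪v, X1 ω⟫ = c) :
    Set.InjOn (fun l => ∫ t in Icc (0:ℝ) 1, f t • gradient (cgfK P X1) (f t • l))
      {l | ∀ t ∈ Icc (0:ℝ) 1, f t • l ∈ interior (lapDom P X1)} := by
  obtain ⟨C, hC⟩ := hLip
  have hf : ContinuousOn f (Icc (0:ℝ) 1) := hC.continuousOn
  have hcont : ∀ l : EuclideanSpace ℝ (Fin d),
      (∀ t ∈ Icc (0:ℝ) 1, f t • l ∈ interior (lapDom P X1)) →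
      ContinuousOn (fun t => f t • gradient (cgfK P X1) (f t • l)) (Icc (0:ℝ) 1) := fun l hl =>
    hf.smul ((continuousOn_gradient_cgfK hX1).comp (hf.smul continuousOn_const) hl)
  intro l₁ h₁ l₂ h₂ heq
  by_contra hne
  have hi₁ := (hcont l₁ h₁).integrableOn_Icc (μ := volume)
  have hi₂ := (hcont l₂ h₂).integrableOn_Icc (μ := volume)
  let h : ℝ → ℝ := fun t => ⟪l₁ - l₂,
    f t • gradient (cgfK P X1) (f t • l₁) - f t • gradient (cgfK P X1) (f t • l₂)⟫
  have hint : ∫ t in Icc (0:ℝ) 1, h t = 0 := by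
    refine (integral_inner (𝕜 := ℝ) (hi₁.sub hi₂) (l₁ - l₂)).trans ?_
    rw [integral_sub' hi₁ hi₂, sub_eq_zero.2 heq, inner_zero_right]
  have hpair : ∀ t, h t = ⟪gradient (cgfK P X1) (f t • l₁) - gradient (cgfK P X1) (f t • l₂),
      f t • l₁ - f t • l₂⟫ := fun t => by
    simp only [h]
    rw [← smul_sub, ← smul_sub, inner_smul_right, inner_smul_right, real_inner_comm]
  have hpos : ∀ t ∈ Icc (0:ℝ) 1, f t ≠ 0 → 0 < h t := fun t ht hft => by
    rw [hpair]
    exact gradient_cgfK_strict_mono hX1 hfull (h₁ t ht) (h₂ t ht)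
      fun e => hne (smul_right_injective _ hft e)
  have hnonneg : ∀ t ∈ Icc (0:ℝ) 1, 0 ≤ h t := fun t ht => by
    by_cases hft : f t = 0
    · simp [h, hft]
    · exact (hpos t ht hft).le
  have hae := (setIntegral_eq_zero_iff_of_nonneg_ae
    ((ae_restrict_iff' measurableSet_Icc).2 (ae_of_all _ hnonneg))
    ((hi₁.sub hi₂).const_inner (𝕜 := ℝ) (l₁ - l₂))).1 hint
  have hfae : f =ᵐ[volume.restrict (Icc (0:ℝ) 1)] fun _ => 0 := by
    filter_upwards [hae, ae_restrict_mem measurableSet_Icc] with t ht hmem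
    by_contra hft
    exact (hpos t hmem hft).ne' ht
  obtain ⟨t, ht, hft⟩ := hfne
  exact hft (Measure.eqOn_Icc_of_ae_eq volume zero_ne_one hfae hf continuousOn_const ht)
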